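/- Let H be a Hopf monoid in a braided monoidal category C (not assumed symmetric), and let (δ, σ) be a braided modular pair in involution for H. Then σ₂ ∘ τ₃ ∘ τ₃ = τ₂ ∘ σ₀ as morphisms H ⊗ H ⊗ H → H ⊗ H, where σ₀ := (ε ⊗ 1_{H⊗H}) and σ₂ := (1_{H⊗H} ⊗ ε) (composed with the evident unitors). -/

import Mathlib

open CategoryTheory MonoidalCategory

universe v u

/-- A Hopf algebra object (a "braided Hopf algebra") in a braided monoidal category `C`,
consisting of an object `X` with multiplication `mul`, unit `one`, comultiplication
`comul`, counit `counit` and antipode `antipode`, satisfying the usual axioms, with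
the compatibility of `mul` and `comul` expressed via the braiding. -/
structure HopfObj (C : Type u) [Category.{v} C] [MonoidalCategory C]
    [BraidedCategory C] where
  X : C
  mul : X ⊗ X ⟶ X
  one : 𝟙_ C ⟶ X
  comul : X ⟶ X ⊗ X
  counit : X ⟶ 𝟙_ C
  antipode : X ⟶ X
  mul_assoc : (mul ▷ X) ≫ mul = (α_ X X X).hom ≫ (X ◁ mul) ≫ mul
  one_mul : (one ▷ X) ≫ mul = (λ_ X).hom
  mul_one : (X ◁ one) ≫ mul = (ρ_ X).hom
  comul_assoc : comul ≫ (comul ▷ X) ≫ (α_ X X X).hom = comul ≫ (X ◁ comul)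
  counit_comul : comul ≫ (counit ▷ X) = (λ_ X).inv
  comul_counit : comul ≫ (X ◁ counit) = (ρ_ X).inv
  mul_comul : mul ≫ comul =
      (comul ⊗ₘ comul) ≫ (α_ X X (X ⊗ X)).hom ≫ (X ◁ (α_ X X X).inv) ≫
        (X ◁ ((β_ X X).hom ▷ X)) ≫ (X ◁ (α_ X X X).hom) ≫
        (α_ X X (X ⊗ X)).inv ≫ (mul ⊗ₘ mul)
  one_comul : one ≫ comul = (λ_ (𝟙_ C)).inv ≫ (one ⊗ₘ one)
  mul_counit : mul ≫ counit = (counit ⊗ₘ counit) ≫ (λ_ (𝟙_ C)).hom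
  one_counit : one ≫ counit = 𝟙 (𝟙_ C)
  antipode_left : comul ≫ (antipode ▷ X) ≫ mul = counit ≫ one
  antipode_right : comul ≫ (X ◁ antipode) ≫ mul = counit ≫ one

variable {C : Type u} [Category.{v} C] [MonoidalCategory C] [BraidedCategory C]

/-- The `δ`-twisted antipode `S̃ = λ_H ∘ (δ ⊗ S) ∘ Δ`. -/
def HopfObj.twist (A : _root_.HopfObj C) (δ : A.X ⟶ 𝟙_ C) : A.X ⟶ A.X :=
  A.comul ≫ (δ ⊗ₘ A.antipode) ≫ (λ_ A.X).hom

/-- `δ : H ⟶ 𝟙` is a character, i.e. a morphism of monoid objects. -/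
def HopfObj.IsCharacter (A : _root_.HopfObj C) (δ : A.X ⟶ 𝟙_ C) : Prop :=
  A.mul ≫ δ = (δ ⊗ₘ δ) ≫ (λ_ (𝟙_ C)).hom ∧ A.one ≫ δ = 𝟙 (𝟙_ C)

/-- `σ : 𝟙 ⟶ H` is a cocharacter, i.e. a morphism of comonoid objects. -/
def HopfObj.IsCocharacter (A : _root_.HopfObj C) (σ : 𝟙_ C ⟶ A.X) : Prop :=
  σ ≫ A.comul = (λ_ (𝟙_ C)).inv ≫ (σ ⊗ₘ σ) ∧ σ ≫ A.counit = 𝟙 (𝟙_ C)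

/-- The morphism `m ∘ (m ⊗ 1_H) ∘ ((S ∘ σ) ⊗ (S̃ ∘ S̃) ⊗ σ) : H ⟶ H`
(with unitors inserted). -/
def HopfObj.bmpiMap (A : _root_.HopfObj C) (δ : A.X ⟶ 𝟙_ C) (σ : 𝟙_ C ⟶ A.X) :
    A.X ⟶ A.X :=
  (λ_ A.X).inv ≫ ((σ ≫ A.antipode) ⊗ₘ (A.twist δ ≫ A.twist δ)) ≫
    (ρ_ (A.X ⊗ A.X)).inv ≫ ((A.X ⊗ A.X) ◁ σ) ≫ (A.mul ▷ A.X) ≫ A.mul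

/-- `(δ, σ)` is a braided modular pair in involution. -/
def HopfObj.IsBMPI (A : _root_.HopfObj C) (δ : A.X ⟶ 𝟙_ C) (σ : 𝟙_ C ⟶ A.X) : Prop :=
  σ ≫ δ = 𝟙 (𝟙_ C) ∧ A.bmpiMap δ σ = 𝟙 A.X

/-- The cyclic operator `τ₂ = (m ⊗ m) ∘ (1_H ⊗ ψ ⊗ 1_H) ∘ ((Δ ∘ S̃) ⊗ 1_H ⊗ σ)`,
with the `σ`-factor inserted via `H ⊗ H ≅ (H ⊗ H) ⊗ 𝟙`. -/
def HopfObj.tau2 (A : _root_.HopfObj C) (δ : A.X ⟶ 𝟙_ C) (σ : 𝟙_ C ⟶ A.X) :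
    A.X ⊗ A.X ⟶ A.X ⊗ A.X :=
  (ρ_ (A.X ⊗ A.X)).inv ≫ (((A.twist δ ≫ A.comul) ⊗ₘ 𝟙 A.X) ⊗ₘ σ) ≫
    (((α_ A.X A.X A.X).hom ≫ (A.X ◁ (β_ A.X A.X).hom) ≫ (α_ A.X A.X A.X).inv) ▷ A.X) ≫
    (α_ (A.X ⊗ A.X) A.X A.X).hom ≫ (A.mul ⊗ₘ A.mul)

/-- `Δ² = (1_H ⊗ Δ) ∘ Δ`. -/
def HopfObj.comul2 (A : _root_.HopfObj C) : A.X ⟶ A.X ⊗ (A.X ⊗ A.X) :=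
  A.comul ≫ (A.X ◁ A.comul)

/-- `m₃`, the multiplication of the threefold braided tensor product algebra:
`(m ⊗ m ⊗ m) ∘ (1_H ⊗ ψ ⊗ 1_{H⊗H⊗H}) ∘ (1_{H⊗H⊗H} ⊗ ψ ⊗ 1_H) ∘ (1_{H⊗H} ⊗ ψ ⊗ 1_{H⊗H})`
(with associators inserted). -/
def HopfObj.mul3 (A : _root_.HopfObj C) :
    (A.X ⊗ (A.X ⊗ A.X)) ⊗ (A.X ⊗ (A.X ⊗ A.X)) ⟶ A.X ⊗ (A.X ⊗ A.X) :=
  (α_ A.X (A.X ⊗ A.X) (A.X ⊗ (A.X ⊗ A.X))).hom ≫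
  (A.X ◁ (α_ A.X A.X (A.X ⊗ (A.X ⊗ A.X))).hom) ≫
  (A.X ◁ (A.X ◁ ((α_ A.X A.X (A.X ⊗ A.X)).inv ≫
    ((β_ A.X A.X).hom ▷ (A.X ⊗ A.X)) ≫ (α_ A.X A.X (A.X ⊗ A.X)).hom))) ≫
  (A.X ◁ (A.X ◁ (A.X ◁ ((α_ A.X A.X A.X).inv ≫
    ((β_ A.X A.X).hom ▷ A.X) ≫ (α_ A.X A.X A.X).hom)))) ≫
  (A.X ◁ ((α_ A.X A.X (A.X ⊗ (A.X ⊗ A.X))).inv ≫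
    ((β_ A.X A.X).hom ▷ (A.X ⊗ (A.X ⊗ A.X))) ≫
    (α_ A.X A.X (A.X ⊗ (A.X ⊗ A.X))).hom)) ≫
  (A.X ◁ (A.X ◁ (α_ A.X A.X (A.X ⊗ A.X)).inv)) ≫
  (α_ A.X A.X ((A.X ⊗ A.X) ⊗ (A.X ⊗ A.X))).inv ≫
  (A.mul ⊗ₘ (A.mul ⊗ₘ A.mul))

/-- The cyclic operator `τ₃ = m₃ ∘ ((Δ² ∘ S̃) ⊗ 1_{H⊗H} ⊗ σ)`, with the `σ`-factor
inserted via `H^{⊗3} ≅ H^{⊗3} ⊗ 𝟙`. -/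
def HopfObj.tau3 (A : _root_.HopfObj C) (δ : A.X ⟶ 𝟙_ C) (σ : 𝟙_ C ⟶ A.X) :
    A.X ⊗ (A.X ⊗ A.X) ⟶ A.X ⊗ (A.X ⊗ A.X) :=
  ((A.twist δ ≫ A.comul2) ⊗ₘ (A.X ◁ ((ρ_ A.X).inv ≫ (A.X ◁ σ)))) ≫ A.mul3

/-- Codegeneracy `σ₀ = ε ⊗ 1_{H⊗H}` (composed with the evident unitor). -/
def HopfObj.deg0 (A : _root_.HopfObj C) : A.X ⊗ (A.X ⊗ A.X) ⟶ A.X ⊗ A.X :=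
  (A.counit ▷ (A.X ⊗ A.X)) ≫ (λ_ (A.X ⊗ A.X)).hom

/-- Codegeneracy `σ₁ = 1_H ⊗ ε ⊗ 1_H` (composed with the evident unitor). -/
def HopfObj.deg1 (A : _root_.HopfObj C) : A.X ⊗ (A.X ⊗ A.X) ⟶ A.X ⊗ A.X :=
  A.X ◁ ((A.counit ▷ A.X) ≫ (λ_ A.X).hom)

/-- Codegeneracy `σ₂ = 1_{H⊗H} ⊗ ε` (composed with the evident unitor). -/
def HopfObj.deg2 (A : _root_.HopfObj C) : A.X ⊗ (A.X ⊗ A.X) ⟶ A.X ⊗ A.X :=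
  A.X ◁ ((A.X ◁ A.counit) ≫ (ρ_ A.X).hom)

/-!
In the convolution algebra the twisted antipode is `S̃ = δη * S`, so it is an anti-homomorphism of
algebras (up to the braiding), it satisfies `S̃ * id = δη`, and `δ ∘ S̃ = ε`.

Let `H` act diagonally on `H ⊗ H`. The codegeneracy `σ₂` is an algebra morphism
`H ⊗ H ⊗ H ⟶ H ⊗ H` of braided tensor powers; it takes `Δ²` to `Δ` and discards `σ`, so
`σ₂ ∘ τ₃` is just the action `h ⊗ b ↦ S̃(h) • b`. On the other hand
`τ₃ (g ⊗ x ⊗ y) = h₁ x ⊗ h₂ • (y ⊗ σ)` up to the braiding, where `h = S̃(g)`. Hence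
`σ₂ τ₃ τ₃ (g ⊗ x ⊗ y) = S̃(h₁ x) • h₂ • (y ⊗ σ) = S̃(x) • (S̃(h₁) h₂) • (y ⊗ σ)`,
which is `δ(h) S̃(x) • (y ⊗ σ) = ε(g) τ₂ (x ⊗ y)`.
-/

open scoped MonObj ComonObj CategoryTheory.HopfObj

theorem tensorμ_comp_braiding_whiskerRight (V W X Y : C) :
    tensorμ V W X Y ≫ (β_ V X).hom ▷ (W ⊗ Y) =
      (α_ (V ⊗ W) X Y).inv ≫ (β_ (V ⊗ W) X).hom ▷ Y ≫ (α_ X (V ⊗ W) Y).hom ≫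
        X ◁ (α_ V W Y).hom ≫ (α_ X V (W ⊗ Y)).inv := by
  rw [BraidedCategory.braiding_tensor_left_hom, tensorμ]
  monoidal

theorem whiskerRight_comp_braiding_whiskerRight {Y Z : C} (f : Y ⟶ Z) (X B : C) :
    f ▷ (X ⊗ B) ≫ (α_ Z X B).inv ≫ (β_ Z X).hom ▷ B ≫ (α_ X Z B).hom =
      (α_ Y X B).inv ≫ (β_ Y X).hom ▷ B ≫ (α_ X Y B).hom ≫ X ◁ f ▷ B := by
  rw [associator_inv_naturality_left_assoc, ← comp_whiskerRight_assoc,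
    BraidedCategory.braiding_naturality_left, comp_whiskerRight_assoc,
    associator_naturality_middle]

section ModObj

theorem tensorHom_comp_mul_smul {D : Type*} [Category* D] [MonoidalCategory D] {H B X Y : D}
    [MonObj H] [ModObj H B] (f : X ⟶ H) (g : Y ⟶ H) :
    ((f ⊗ₘ g) ≫ μ) ▷ B ≫ γ[H, B] = (α_ X Y B).hom ≫ (f ⊗ₘ (g ▷ B ≫ γ[H, B])) ≫ γ[H, B] := by
  simp [MonoidalCategory.tensorHom_def]

variable {H B : C} [MonObj H] [ModObj H B]

-- Up to braiding: `t (h₁ x) • h₂ • b = t x • (t h₁ * h₂) • b = e h • t x • b`, for `d h = h₁ ⊗ h₂`.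
theorem mul_smul_smul_of_antihom {Y : C} {d : Y ⟶ H ⊗ H} {e : Y ⟶ 𝟙_ C} {t : H ⟶ H}
    (ht : μ ≫ t = (t ⊗ₘ t) ≫ (β_ H H).hom ≫ μ) (hd : d ≫ t ▷ H ≫ μ = e ≫ η) :
    d ▷ (H ⊗ B) ≫ tensorμ H H H B ≫ ((μ ≫ t) ⊗ₘ γ[H, B]) ≫ γ[H, B] =
      e ▷ (H ⊗ B) ≫ (λ_ (H ⊗ B)).hom ≫ t ▷ B ≫ γ[H, B] := by
  have swap : (μ ≫ t) ⊗ₘ γ[H, B] =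
      (β_ H H).hom ▷ (H ⊗ B) ≫ (((t ⊗ₘ t) ≫ μ) ⊗ₘ γ[H, B]) := by
    rw [ht, BraidedCategory.braiding_naturality_assoc, ← tensorHom_id,
      tensorHom_comp_tensorHom, Category.id_comp]
  have regroup : H ◁ (α_ H H B).hom ≫ (α_ H H (H ⊗ B)).inv ≫
      (((t ⊗ₘ t) ≫ μ) ⊗ₘ γ[H, B]) ≫ γ[H, B] =
      H ◁ ((t ▷ H ≫ μ) ▷ B ≫ γ[H, B]) ≫ t ▷ B ≫ γ[H, B] := by
    rw [MonoidalCategory.tensorHom_def', Category.assoc, tensorHom_comp_mul_smul,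
      ← tensorHom_id t H, tensorHom_comp_mul_smul]
    simp [MonoidalCategory.tensorHom_def']
  have cancel : d ▷ B ≫ (t ▷ H ≫ μ) ▷ B ≫ γ[H, B] = e ▷ B ≫ (λ_ B).hom := by
    rw [← comp_whiskerRight_assoc, hd, comp_whiskerRight_assoc, ModObj.one_smul_self]
  have unbraid : (α_ Y H B).inv ≫ (β_ Y H).hom ▷ B ≫ (α_ H Y B).hom ≫
      H ◁ (e ▷ B ≫ (λ_ B).hom) = e ▷ (H ⊗ B) ≫ (λ_ (H ⊗ B)).hom := by
    rw [whiskerLeft_comp, ← reassoc_of% whiskerRight_comp_braiding_whiskerRight e H B]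
    simp
  calc
    _ = d ▷ (H ⊗ B) ≫ (α_ (H ⊗ H) H B).inv ≫ (β_ (H ⊗ H) H).hom ▷ B ≫
        (α_ H (H ⊗ H) B).hom ≫ H ◁ ((t ▷ H ≫ μ) ▷ B ≫ γ[H, B]) ≫ t ▷ B ≫ γ[H, B] := by
      rw [swap, Category.assoc, reassoc_of% tensorμ_comp_braiding_whiskerRight H H H B, regroup]
    _ = (α_ Y H B).inv ≫ (β_ Y H).hom ▷ B ≫ (α_ H Y B).hom ≫
        H ◁ (e ▷ B ≫ (λ_ B).hom) ≫ t ▷ B ≫ γ[H, B] := by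
      rw [reassoc_of% whiskerRight_comp_braiding_whiskerRight d H B,
        ← whiskerLeft_comp_assoc, cancel]
    _ = _ := by rw [reassoc_of% unbraid]

end ModObj

section BimonObj

variable (H : C) [BimonObj H]

instance isMonHom_comul : IsMonHom Δ[H] := ⟨BimonObj.one_comul H, BimonObj.mul_comul H⟩

instance isMonHom_counit : IsMonHom ε[H] := ⟨BimonObj.one_counit H, BimonObj.mul_counit H⟩

/-- The diagonal `H`-module `H ⊗ H`, on which `h` acts as left multiplication by `h₁ ⊗ h₂`.
It is encoded as the restriction along `Δ` of the regular module of the algebra `H ⊗ H`. -/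
abbrev diagonalModObj : ModObj H (H ⊗ H) :=
  letI := ModObj.regular (H ⊗ H)
  Mod.scalarRestriction Δ[H] (H ⊗ H)

end BimonObj

attribute [local instance] diagonalModObj

theorem diagonal_smul (H : C) [BimonObj H] :
    γ[H, H ⊗ H] = Δ[H] ▷ (H ⊗ H) ≫ μ[H ⊗ H] := rfl

namespace HopfObj

variable (A : _root_.HopfObj C)

/-- The underlying object of `A` as an instance of Mathlib's class of Hopf monoids, which gives
access to its theory of antipodes, convolution and modules. -/
instance instHopfObj : CategoryTheory.HopfObj A.X where
  mul := A.mul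
  one := A.one
  comul := A.comul
  counit := A.counit
  antipode := A.antipode
  mul_assoc := A.mul_assoc
  one_mul := A.one_mul
  mul_one := A.mul_one
  comul_assoc := A.comul_assoc.symm
  counit_comul := A.counit_comul
  comul_counit := A.comul_counit
  mul_comul := by simpa [tensorμ] using A.mul_comul
  one_comul := A.one_comul
  mul_counit := by simpa using A.mul_counit
  one_counit := A.one_counit
  antipode_left := A.antipode_left
  antipode_right := A.antipode_right

section Twist

variable {A} (δ : A.X ⟶ 𝟙_ C)

theorem IsCharacter.isMonHom {δ : A.X ⟶ 𝟙_ C} (hδ : A.IsCharacter δ) : IsMonHom δ :=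
  ⟨hδ.2, hδ.1⟩

theorem twist_eq : A.twist δ = Δ ≫ (δ ⊗ₘ 𝒮) ≫ (λ_ A.X).hom := rfl

theorem comul_twist_mul : Δ ≫ A.twist δ ▷ A.X ≫ μ = δ ≫ η := by
  let d : Conv A.X A.X := δ ≫ η
  let s : Conv A.X A.X := 𝒮
  let i : Conv A.X A.X := 𝟙 A.X
  have twist_eq_mul : A.twist δ = d * s := by
    rw [Conv.mul_eq d s]
    simp [twist_eq, d, s, MonoidalCategory.tensorHom_def, ← whisker_exchange_assoc]
  have antipode_mul_id : s * i = 1 := by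
    rw [Conv.mul_eq s i, Conv.one_eq, whiskerLeft_id, Category.id_comp]
    exact CategoryTheory.HopfObj.antipode_left A.X
  have twist_mul_id : d * s * i = d := by
    rw [_root_.mul_assoc, antipode_mul_id, _root_.mul_one]
  rwa [Conv.mul_eq (d * s) i, ← twist_eq_mul, whiskerLeft_id, Category.id_comp] at twist_mul_id

theorem twist_comp_character [IsMonHom δ] : A.twist δ ≫ δ = ε := by
  calc
    A.twist δ ≫ δ = Δ ≫ A.X ◁ 𝒮 ≫ μ ≫ δ := by
      simp [twist_eq, MonoidalCategory.tensorHom_def, whisker_exchange_assoc]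
    _ = ε := by simp [-IsMonHom.mul_hom]

theorem mul_twist [IsMonHom δ] :
    μ ≫ A.twist δ = (A.twist δ ⊗ₘ A.twist δ) ≫ (β_ A.X A.X).hom ≫ μ := by
  have mul_comp : (μ ⊗ₘ μ) ≫ (δ ⊗ₘ 𝒮[A.X]) =
      ((δ ⊗ₘ δ) ⊗ₘ (𝒮 ⊗ₘ 𝒮)) ≫ ((λ_ (𝟙_ C)).hom ⊗ₘ ((β_ A.X A.X).hom ≫ μ)) := by
    rw [tensorHom_comp_tensorHom, tensorHom_comp_tensorHom, IsMonHom.mul_hom,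
      CategoryTheory.HopfObj.mul_antipode]
    rfl
  rw [twist_eq, BimonObj.mul_comul_assoc, reassoc_of% mul_comp, ← tensorμ_natural_assoc,
    ← tensorHom_comp_tensorHom_assoc, ← tensorHom_comp_tensorHom_assoc, leftUnitor_monoidal]
  simp [MonoidalCategory.tensorHom_def]

end Twist

theorem mul3_eq_mul : A.mul3 = μ[A.X ⊗ A.X ⊗ A.X] := by
  have shuffle (X : C) : (α_ X (X ⊗ X) (X ⊗ X ⊗ X)).hom ≫ X ◁ (α_ X X (X ⊗ X ⊗ X)).hom ≫
      X ◁ X ◁ ((α_ X X (X ⊗ X)).inv ≫ (β_ X X).hom ▷ (X ⊗ X) ≫ (α_ X X (X ⊗ X)).hom) ≫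
      X ◁ X ◁ X ◁ ((α_ X X X).inv ≫ (β_ X X).hom ▷ X ≫ (α_ X X X).hom) ≫
      X ◁ ((α_ X X (X ⊗ X ⊗ X)).inv ≫ (β_ X X).hom ▷ (X ⊗ X ⊗ X) ≫
        (α_ X X (X ⊗ X ⊗ X)).hom) ≫
      X ◁ X ◁ (α_ X X (X ⊗ X)).inv ≫ (α_ X X ((X ⊗ X) ⊗ X ⊗ X)).inv =
      tensorμ X (X ⊗ X) X (X ⊗ X) ≫ (X ⊗ X) ◁ tensorμ X X X X := by
    simp only [tensorμ, BraidedCategory.braiding_tensor_left_hom]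
    -- The two sides differ by exchanging two braidings on disjoint pairs of strands.
    calc
      _ = 𝟙 _ ⊗≫ X ◁ X ◁ (β_ X X).hom ▷ (X ⊗ X) ⊗≫
          X ◁ ((X ⊗ X) ◁ (β_ X X).hom ≫ (β_ X X).hom ▷ (X ⊗ X)) ▷ X ⊗≫ 𝟙 _ := by monoidal
      _ = _ := by rw [whisker_exchange]; monoidal
  calc
    A.mul3 = (tensorμ A.X (A.X ⊗ A.X) A.X (A.X ⊗ A.X) ≫ (A.X ⊗ A.X) ◁ tensorμ A.X A.X A.X A.X) ≫
        (A.mul ⊗ₘ (A.mul ⊗ₘ A.mul)) := by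
      simp only [mul3, ← shuffle, Category.assoc]
    _ = tensorμ A.X (A.X ⊗ A.X) A.X (A.X ⊗ A.X) ≫ (μ ⊗ₘ μ[A.X ⊗ A.X]) := by
      rw [Category.assoc, ← id_tensorHom, tensorHom_comp_tensorHom, Category.id_comp]; rfl

theorem deg2_eq : A.deg2 = A.X ◁ (A.X ◁ ε ≫ (ρ_ A.X).hom) := rfl

instance isMonHom_deg2 : IsMonHom A.deg2 :=
  inferInstanceAs (IsMonHom (A.X ◁ (A.X ◁ ε ≫ (ρ_ A.X).hom)))

theorem comul2_comp_deg2 : A.comul2 ≫ A.deg2 = Δ := by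
  rw [comul2, deg2, Category.assoc, ← whiskerLeft_comp, reassoc_of% A.comul_counit,
    Iso.inv_hom_id, whiskerLeft_id, Category.comp_id]
  rfl

variable {A} (δ : A.X ⟶ 𝟙_ C) {σ : 𝟙_ C ⟶ A.X}

theorem tau3_comp_deg2 (hσ : σ ≫ A.counit = 𝟙 (𝟙_ C)) :
    A.tau3 δ σ ≫ A.deg2 = A.twist δ ▷ (A.X ⊗ A.X) ≫ γ[A.X, A.X ⊗ A.X] := by
  have insert_comp_deg2 : A.X ◁ ((ρ_ A.X).inv ≫ A.X ◁ σ) ≫ A.deg2 = 𝟙 (A.X ⊗ A.X) := by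
    change σ ≫ ε = _ at hσ
    simp [deg2_eq, ← whiskerLeft_comp_assoc, ← whiskerLeft_comp, hσ]
  calc
    A.tau3 δ σ ≫ A.deg2 = (((A.twist δ ≫ A.comul2) ≫ A.deg2) ⊗ₘ
        (A.X ◁ ((ρ_ A.X).inv ≫ A.X ◁ σ) ≫ A.deg2)) ≫ μ := by
      rw [tau3, mul3_eq_mul, Category.assoc, IsMonHom.mul_hom, tensorHom_comp_tensorHom_assoc]
    _ = _ := by
      rw [insert_comp_deg2, Category.assoc, comul2_comp_deg2, tensorHom_id, comp_whiskerRight_assoc]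
      rfl

variable (σ)

theorem tau3_eq : A.tau3 δ σ =
    (A.twist δ ⊗ₘ A.X ◁ ((ρ_ A.X).inv ≫ A.X ◁ σ)) ≫ Δ ▷ (A.X ⊗ A.X ⊗ A.X) ≫
      tensorμ A.X A.X A.X (A.X ⊗ A.X) ≫ (μ ⊗ₘ γ[A.X, A.X ⊗ A.X]) := by
  have comul_tensorμ : (A.X ◁ A.comul) ▷ (A.X ⊗ A.X ⊗ A.X) ≫
      tensorμ A.X (A.X ⊗ A.X) A.X (A.X ⊗ A.X) =
        tensorμ A.X A.X A.X (A.X ⊗ A.X) ≫ (A.X ⊗ A.X) ◁ A.comul ▷ (A.X ⊗ A.X) := by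
    simpa only [id_tensorHom, id_whiskerRight] using
      tensorμ_natural_left (𝟙 A.X) A.comul A.X (A.X ⊗ A.X)
  have mul_tensor_smul : μ ⊗ₘ γ[A.X, A.X ⊗ A.X] = (A.X ⊗ A.X) ◁ Δ ▷ (A.X ⊗ A.X) ≫
      (μ ⊗ₘ μ[A.X ⊗ A.X]) := by
    rw [← id_tensorHom, tensorHom_comp_tensorHom, Category.id_comp, diagonal_smul]
  rw [mul_tensor_smul]
  change _ = _ ≫ A.comul ▷ _ ≫ _ ≫ (A.X ⊗ A.X) ◁ A.comul ▷ (A.X ⊗ A.X) ≫ _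
  rw [← reassoc_of% comul_tensorμ, tau3, mul3_eq_mul, comul2, ← comp_whiskerRight_assoc,
    ← tensorHom_id, tensorHom_comp_tensorHom_assoc, Category.comp_id]
  rfl

theorem tau2_eq : A.tau2 δ σ =
    (A.twist δ ⊗ₘ ((ρ_ A.X).inv ≫ A.X ◁ σ)) ≫ γ[A.X, A.X ⊗ A.X] := by
  have merge : (A.twist δ ⊗ₘ ((ρ_ A.X).inv ≫ A.X ◁ σ)) ≫ A.comul ▷ (A.X ⊗ A.X) =
      (A.twist δ ≫ A.comul) ▷ A.X ≫ (A.X ⊗ A.X) ◁ ((ρ_ A.X).inv ≫ A.X ◁ σ) := by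
    rw [← tensorHom_id, tensorHom_comp_tensorHom, Category.comp_id,
      MonoidalCategory.tensorHom_def]
  change _ = _ ≫ A.comul ▷ (A.X ⊗ A.X) ≫ tensorμ A.X A.X A.X A.X ≫ (A.mul ⊗ₘ A.mul)
  rw [reassoc_of% merge, tau2, tensorμ]
  simp only [← Category.assoc]
  congr 1
  simp only [MonoidalCategory.tensorHom_def]
  monoidal

variable (A)

theorem deg2_tau3_tau3_general (hδ : A.IsCharacter δ) (hσ : σ ≫ A.counit = 𝟙 (𝟙_ C)) :
    A.tau3 δ σ ≫ A.tau3 δ σ ≫ A.deg2 = A.deg0 ≫ A.tau2 δ σ := by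
  have : IsMonHom δ := hδ.isMonHom
  let r := (ρ_ A.X).inv ≫ A.X ◁ σ
  have merge : (μ ⊗ₘ γ[A.X, A.X ⊗ A.X]) ≫ A.twist δ ▷ (A.X ⊗ A.X) =
      (μ ≫ A.twist δ) ⊗ₘ γ[A.X, A.X ⊗ A.X] := by
    rw [← tensorHom_id, tensorHom_comp_tensorHom, Category.comp_id]
  have discard : (A.twist δ ⊗ₘ A.X ◁ r) ≫ δ ▷ (A.X ⊗ A.X ⊗ A.X) ≫ (λ_ (A.X ⊗ A.X ⊗ A.X)).hom =
      A.deg0 ≫ A.X ◁ r := by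
    rw [tensorHom_def'_assoc, ← comp_whiskerRight_assoc, twist_comp_character,
      whisker_exchange_assoc, leftUnitor_naturality, deg0, Category.assoc]
    rfl
  calc
    A.tau3 δ σ ≫ A.tau3 δ σ ≫ A.deg2 = (A.twist δ ⊗ₘ A.X ◁ r) ≫ Δ ▷ (A.X ⊗ A.X ⊗ A.X) ≫
        tensorμ A.X A.X A.X (A.X ⊗ A.X) ≫ ((μ ≫ A.twist δ) ⊗ₘ γ[A.X, A.X ⊗ A.X]) ≫
          γ[A.X, A.X ⊗ A.X] := by
      rw [tau3_comp_deg2 δ hσ, tau3_eq, ← merge]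
      simp only [r, Category.assoc]
    _ = A.deg0 ≫ A.X ◁ r ≫ A.twist δ ▷ (A.X ⊗ A.X) ≫ γ[A.X, A.X ⊗ A.X] := by
      rw [mul_smul_smul_of_antihom (mul_twist δ) (comul_twist_mul δ), reassoc_of% discard]
    _ = A.deg0 ≫ A.tau2 δ σ := by
      rw [tau2_eq, tensorHom_def'_assoc]

end HopfObj

/-- `σ₂ ∘ τ₃ ∘ τ₃ = τ₂ ∘ σ₀` as morphisms `H ⊗ H ⊗ H ⟶ H ⊗ H`. -/
theorem HopfObj.deg2_tau3_tau3 (A : _root_.HopfObj C) (δ : A.X ⟶ 𝟙_ C) (σ : 𝟙_ C ⟶ A.X)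
    (hδ : A.IsCharacter δ) (hσ : A.IsCocharacter σ) (hbmpi : A.IsBMPI δ σ) :
    A.tau3 δ σ ≫ A.tau3 δ σ ≫ A.deg2 = A.deg0 ≫ A.tau2 δ σ := by
  exact A.deg2_tau3_tau3_general δ σ hδ hσ.2
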